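/- Let M be the 27 × 27 integer matrix obtained by stacking vertically the three Kronecker products r ⊗ I₃ ⊗ I₃, I₃ ⊗ r ⊗ I₃, and I₃ ⊗ I₃ ⊗ r, where I₃ is the 3 × 3 identity matrix and r = (1, 1, 1). Let x_p = (0,0,0,1,52,1,0,0,0,0,53,1,52,2704,52,0,54,53,0,0,0,1,106,1,1,0,1) ∈ ℤ²⁷. Then the set of vectors x ∈ ℤ²⁷ with all coordinates nonnegative satisfying M x = M x_p and x₂₇ = 1 has exactly 2 elements. -/

import Mathlib

/-!
View a vector of length 27 as a 3 × 3 × 3 array; the rows of `M` record its 27 axis-parallel line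
sums (`M_mulVec`). Since the entries are nonnegative, every line with sum `0` vanishes. This
determines the first slab, then the first rows of the other two slabs. In the third slab the last
row has sum `2` and last entry `1`, so it is `(1, 0, 1)` or `(0, 1, 1)`, and either choice
determines all remaining entries through the line sums. The first choice gives `xp`, the second
gives `xq`.
-/

open Matrix Kronecker

/-- The 1 × 3 all-ones row vector `r = (1, 1, 1)`. -/
def rOnes : Matrix (Fin 1) (Fin 3) ℤ := Matrix.of fun _ _ => 1

/-- Lexicographic identification of index triples `(i₁, i₂, i₃)` with `Fin 27`
(first coordinate most significant), matching the lexicographic ordering of the triples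
`(i₁, i₂, i₃) ∈ {1, 2, 3}³` used to index the 27 coordinates. -/
def colEquiv : (Fin 3 × Fin 3) × Fin 3 ≃ Fin 27 :=
  (Equiv.prodCongr finProdFinEquiv (Equiv.refl (Fin 3))).trans finProdFinEquiv

def rowEquiv1 : (Fin 1 × Fin 3) × Fin 3 ≃ Fin 9 :=
  (Equiv.prodCongr finProdFinEquiv (Equiv.refl (Fin 3))).trans finProdFinEquiv

def rowEquiv2 : (Fin 3 × Fin 1) × Fin 3 ≃ Fin 9 :=
  (Equiv.prodCongr finProdFinEquiv (Equiv.refl (Fin 3))).trans finProdFinEquiv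

def rowEquiv3 : (Fin 3 × Fin 3) × Fin 1 ≃ Fin 9 :=
  (Equiv.prodCongr finProdFinEquiv (Equiv.refl (Fin 1))).trans finProdFinEquiv

/-- The 27 × 27 matrix obtained by stacking vertically the three Kronecker products
`r ⊗ I₃ ⊗ I₃`, `I₃ ⊗ r ⊗ I₃` and `I₃ ⊗ I₃ ⊗ r`, where `I₃` is the 3 × 3 identity matrix and
`r = (1, 1, 1)` is the 1 × 3 all-ones row, with columns indexed lexicographically by triples. -/
def M : Matrix (Fin 27) (Fin 27) ℤ :=
  Matrix.reindex
    ((rowEquiv1.sumCongr (rowEquiv2.sumCongr rowEquiv3)).trans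
      (((Equiv.refl (Fin 9)).sumCongr finSumFinEquiv).trans finSumFinEquiv))
    colEquiv
    (Matrix.fromRows
      (rOnes ⊗ₖ (1 : Matrix (Fin 3) (Fin 3) ℤ) ⊗ₖ (1 : Matrix (Fin 3) (Fin 3) ℤ))
      (Matrix.fromRows
        ((1 : Matrix (Fin 3) (Fin 3) ℤ) ⊗ₖ rOnes ⊗ₖ (1 : Matrix (Fin 3) (Fin 3) ℤ))
        ((1 : Matrix (Fin 3) (Fin 3) ℤ) ⊗ₖ (1 : Matrix (Fin 3) (Fin 3) ℤ) ⊗ₖ rOnes)))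

/-- The particular solution of block 321 (coordinates indexed lexicographically by triples,
coordinate 27 corresponding to (3,3,3)). -/
def xp : Fin 27 → ℤ := ![0,0,0,1,52,1,0,0,0,0,53,1,52,2704,52,0,54,53,0,0,0,1,106,1,1,0,1]

/-- The three coordinates lying on the `k`-th line: the lines in the direction of the first index
come first, then those of the second index, then those of the third, lexicographically each. -/
def line : Fin 27 → Fin 3 → Fin 27 :=
  ![![0, 9, 18], ![1, 10, 19], ![2, 11, 20], ![3, 12, 21], ![4, 13, 22], ![5, 14, 23],
    ![6, 15, 24], ![7, 16, 25], ![8, 17, 26],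
    ![0, 3, 6], ![1, 4, 7], ![2, 5, 8], ![9, 12, 15], ![10, 13, 16], ![11, 14, 17],
    ![18, 21, 24], ![19, 22, 25], ![20, 23, 26],
    ![0, 1, 2], ![3, 4, 5], ![6, 7, 8], ![9, 10, 11], ![12, 13, 14], ![15, 16, 17],
    ![18, 19, 20], ![21, 22, 23], ![24, 25, 26]]

/-- The solution other than `xp`. -/
def xq : Fin 27 → ℤ :=
  ![0, 0, 0, 1, 52, 1, 0, 0, 0, 0, 53, 1, 51, 2705, 52, 1, 53, 53, 0, 0, 0, 2, 105, 1, 0, 1, 1]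

lemma M_apply (k j : Fin 27) : M k j = ∑ t, if j = line k t then (1 : ℤ) else 0 := by
  have h : ∀ p : Fin 27 × Fin 27,
      M p.1 p.2 = ∑ t, if p.2 = line p.1 t then (1 : ℤ) else 0 := by decide +kernel
  exact h (k, j)

lemma M_mulVec (x : Fin 27 → ℤ) (k : Fin 27) : M.mulVec x k = ∑ t, x (line k t) := by
  simp only [Matrix.mulVec, dotProduct, M_apply, Finset.sum_mul]
  rw [Finset.sum_comm]
  simp

lemma M_mulVec_xq : M.mulVec xq = M.mulVec xp := by
  funext k
  rw [M_mulVec, M_mulVec]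
  revert k
  decide +kernel

lemma eq_xp_or_eq_xq (x : Fin 27 → ℤ) (hx : ∀ i, 0 ≤ x i) (hM : M.mulVec x = M.mulVec xp)
    (h26 : x 26 = 1) : x = xp ∨ x = xq := by
  have h : ∀ k, ∑ t, x (line k t) = ∑ t, xp (line k t) := fun k => by
    rw [← M_mulVec, ← M_mulVec, hM]
  simp only [Fin.forall_fin_succ, Fin.sum_univ_three] at h hx
  simp [line, xp] at h hx
  -- The `(3, 3, 1)` entry decides between the two solutions.
  have h24 : x 24 = 1 ∨ x 24 = 0 := by lia
  rcases h24 with h24 | h24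
  · left
    funext i
    fin_cases i <;> simp [xp] <;> lia
  · right
    funext i
    fin_cases i <;> simp [xq] <;> lia


/-- The set of nonnegative integer vectors \`x\` with \`M x = M x_p\` and \`x₂₇ = 1\` (block 321) has exactly 2 elements. -/
theorem block321_solution_count :
    {x : Fin 27 → ℤ | (∀ i, 0 ≤ x i) ∧ M.mulVec x = M.mulVec xp ∧ x 26 = 1}.ncard = 2 := by
  have hset : {x : Fin 27 → ℤ | (∀ i, 0 ≤ x i) ∧ M.mulVec x = M.mulVec xp ∧ x 26 = 1}
      = {xp, xq} := by
    ext x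
    constructor
    · rintro ⟨hx, hM, h26⟩
      exact eq_xp_or_eq_xq x hx hM h26
    · rintro (rfl | rfl)
      · exact ⟨by decide +kernel, rfl, rfl⟩
      · exact ⟨by decide +kernel, M_mulVec_xq, rfl⟩
  rw [hset, Set.ncard_pair]
  exact fun h => absurd (congrFun h 24) (by decide +kernel)
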